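/- Let Λ ⊂ ℝ² be a lattice with first successive minimum λ1 (the length of its shortest nonzero vector), and let R ⊂ ℝ² be a compact convex region containing the origin with boundary length L. Then #{x ∈ Λ ∩ R : x ≠ 0} = area(R)/det(Λ) + O(L/λ1), i.e., there is an absolute constant C such that |#{x ∈ Λ ∩ R, x ≠ 0} − area(R)/det(Λ)| ≤ C·L/λ1. -/

import Mathlib

open MeasureTheory

/-!
Extend a shortest lattice vector `a` to a reduced basis `a, b`. In the coordinates of this basis
the lattice becomes `ℤ × ℤ`, and `R`, which contains the origin and has diameter at most `L`,
becomes a compact convex set inside a square of half-side `M = 2 * L / ‖a‖`. On every line a compact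
convex set contains its length many integers up to `1`, so summing over rows and integrating over
columns gives an error of at most `4 * M + 1` in the plane. If `1 ≤ M`, deleting the origin leaves
an error of at most `6 * M`; if `M < 1`, the origin is the only integer point and the area is at
most `4 * M ^ 2`.

That the Hausdorff measure `L` of the frontier is finite follows from the nearest-point projection
onto `R`: it is `1`-Lipschitz and maps a large circle onto a set containing the frontier.
-/

open Set Metric Module
open scoped ENNReal Real RealInnerProductSpace

section IntegerPoints

theorem natCast_ncard_eq_sum_indicator {α : Type*} {A : Set α} {S : Finset α} (hAS : A ⊆ S) :
    (A.ncard : ℝ) = ∑ x ∈ S, A.indicator 1 x := by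
  classical
  have hcard : A.ncard = (S.filter (· ∈ A)).card := by
    rw [← ncard_coe_finset, Finset.coe_filter]
    exact congrArg ncard (sep_eq_of_subset hAS).symm
  rw [Finset.sum_indicator_eq_sum_filter, hcard]
  simp

theorem abs_ncard_intCast_preimage_sub_volume_le_one {I : Set ℝ} (hI : IsCompact I)
    (hconv : Convex ℝ I) :
    |((Int.cast ⁻¹' I : Set ℤ).ncard : ℝ) - volume.real I| ≤ 1 := by
  rcases I.eq_empty_or_nonempty with rfl | hne
  · simp
  obtain ⟨a, b, hab, rfl⟩ : ∃ a b, a ≤ b ∧ I = Icc a b :=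
    ⟨sInf I, sSup I, csInf_le_csSup hne hI.bddBelow hI.bddAbove,
      eq_Icc_of_connected_compact ⟨hne, hconv.isPreconnected⟩ hI⟩
  have hcard : ((Icc ⌈a⌉ ⌊b⌋).ncard : ℝ) = ⌊b⌋ + 1 - ⌈a⌉ := by
    have hceil : (⌈a⌉ : ℝ) < ⌊b⌋ + 1 + 1 := by
      linarith [Int.ceil_lt_add_one a, Int.lt_floor_add_one b]
    have hle : ⌈a⌉ ≤ ⌊b⌋ + 1 := Int.lt_add_one_iff.1 (by exact_mod_cast hceil)
    rw [← Finset.coe_Icc, ncard_coe_finset]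
    exact_mod_cast Int.card_Icc_of_le _ _ hle
  rw [Int.preimage_Icc, hcard, Real.volume_real_Icc_of_le hab, abs_le]
  constructor <;>
    linarith [Int.ceil_lt_add_one a, Int.lt_floor_add_one b, Int.floor_le b, Int.le_ceil a]

theorem measureReal_prod_eq_integral {α β : Type*} [MeasurableSpace α] [MeasurableSpace β]
    {μ : Measure α} {ν : Measure β} [SFinite μ] [SFinite ν] {K : Set (α × β)}
    (hK : MeasurableSet K) (hfin : (μ.prod ν) K ≠ ∞) :
    (μ.prod ν).real K = ∫ x, ν.real (Prod.mk x ⁻¹' K) ∂μ := by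
  have hindicator : Integrable (K.indicator (1 : α × β → ℝ)) (μ.prod ν) :=
    (integrable_indicator_iff hK).2 (integrableOn_const hfin)
  rw [← integral_indicator_one hK, integral_prod _ hindicator]
  simp only [← integral_indicator_one (measurable_prodMk_left hK)]
  rfl

/-- The one-dimensional estimate holds on every vertical section; integrate it over `A`. -/
theorem abs_sum_measureReal_slice_sub_measureReal_le {α : Type*} [MeasurableSpace α]
    {μ : Measure α} [SFinite μ] {A : Set α} {K : Set (α × ℝ)} {S : Finset ℤ}
    (hA : MeasurableSet A) (hμA : μ A ≠ ∞) (hK : MeasurableSet K)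
    (hμK : (μ.prod volume) K ≠ ∞) (hKA : ∀ p ∈ K, p.1 ∈ A)
    (hcomp : ∀ s, IsCompact (Prod.mk s ⁻¹' K)) (hconv : ∀ s, Convex ℝ (Prod.mk s ⁻¹' K))
    (hS : ∀ (s : α) (n : ℤ), (s, (n : ℝ)) ∈ K → n ∈ S) :
    |∑ n ∈ S, μ.real ((·, (n : ℝ)) ⁻¹' K) - (μ.prod volume).real K| ≤ μ.real A := by
  have hslice (n : ℤ) : MeasurableSet ((·, (n : ℝ)) ⁻¹' K) := measurable_prodMk_right hK
  have hindicator (n : ℤ) : Integrable (((·, (n : ℝ)) ⁻¹' K).indicator (1 : α → ℝ)) μ :=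
    (integrable_indicator_iff (hslice n)).2 <|
      integrableOn_const (measure_ne_top_of_subset (fun s hs => hKA _ hs) hμA)
  have hcount (s : α) : ∑ n ∈ S, ((·, (n : ℝ)) ⁻¹' K).indicator (1 : α → ℝ) s =
      ((Int.cast ⁻¹' (Prod.mk s ⁻¹' K) : Set ℤ).ncard : ℝ) :=
    (natCast_ncard_eq_sum_indicator fun n hn => hS s n hn).symm
  have hsum : ∑ n ∈ S, μ.real ((·, (n : ℝ)) ⁻¹' K) =
      ∫ s, ((Int.cast ⁻¹' (Prod.mk s ⁻¹' K) : Set ℤ).ncard : ℝ) ∂μ := by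
    simp only [← hcount, ← integral_indicator_one (hslice _)]
    exact (integral_finsetSum _ fun n _ => hindicator n).symm
  have hvol : (μ.prod volume).real K = ∫ s, volume.real (Prod.mk s ⁻¹' K) ∂μ :=
    measureReal_prod_eq_integral hK hμK
  have hbound (s : α) : ‖((Int.cast ⁻¹' (Prod.mk s ⁻¹' K) : Set ℤ).ncard : ℝ) -
      volume.real (Prod.mk s ⁻¹' K)‖ ≤ A.indicator 1 s := by
    by_cases hs : s ∈ A
    · simpa [hs] using abs_ncard_intCast_preimage_sub_volume_le_one (hcomp s) (hconv s)
    · have hempty : Prod.mk s ⁻¹' K = ∅ := eq_empty_of_forall_notMem fun t ht => hs (hKA _ ht)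
      simp [hs, hempty]
  have hncard : Integrable (fun s => ((Int.cast ⁻¹' (Prod.mk s ⁻¹' K) : Set ℤ).ncard : ℝ)) μ := by
    simp only [← hcount]
    exact integrable_finsetSum _ fun n _ => hindicator n
  rw [hsum, hvol, ← integral_sub hncard (Measure.integrable_measure_prodMk_left hK hμK),
    ← integral_indicator_one hA]
  exact norm_integral_le_of_norm_le
    ((integrable_indicator_iff hA).2 (integrableOn_const hμA)) (.of_forall hbound)

theorem natCast_ncard_eq_sum_ncard_slice {α β : Type*} {P : Set (α × β)} {S : Finset α}
    {T : Finset β} (hP : P ⊆ S ×ˢ T) :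
    (P.ncard : ℝ) = ∑ y ∈ T, (((·, y) ⁻¹' P).ncard : ℝ) := by
  rw [natCast_ncard_eq_sum_indicator (S := S ×ˢ T) (by simpa using hP), Finset.sum_product_right]
  refine Finset.sum_congr rfl fun y _ => ?_
  exact (natCast_ncard_eq_sum_indicator (A := (·, y) ⁻¹' P) fun x hx => (hP hx).1).symm

theorem isCompact_preimage_prodMk_right {X Y : Type*} [TopologicalSpace X] [TopologicalSpace Y]
    [T1Space Y] {K : Set (X × Y)} (hK : IsCompact K) (y : Y) : IsCompact ((·, y) ⁻¹' K) := by
  have hrange : IsClosed (range ((·, y) : X → X × Y)) := by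
    rw [← preimage_snd_singleton_eq_range]
    exact isClosed_singleton.preimage continuous_snd
  exact (isEmbedding_prodMkLeft y).isInducing.isCompact_preimage hrange hK

theorem isCompact_preimage_prodMk_left {X Y : Type*} [TopologicalSpace X] [TopologicalSpace Y]
    [T1Space X] {K : Set (X × Y)} (hK : IsCompact K) (x : X) : IsCompact (Prod.mk x ⁻¹' K) := by
  have hrange : IsClosed (range (Prod.mk x : Y → X × Y)) := by
    rw [← preimage_fst_singleton_eq_range]
    exact isClosed_singleton.preimage continuous_fst
  exact (isEmbedding_prodMkRight x).isInducing.isCompact_preimage hrange hK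

theorem abs_ncard_intCast_preimage_sub_volume_le {K : Set (ℝ × ℝ)} (hK : IsCompact K)
    (hconv : Convex ℝ K) {a b c d : ℝ} (hab : a ≤ b) (hcd : c ≤ d)
    (hKbox : K ⊆ Icc a b ×ˢ Icc c d) :
    |((Prod.map Int.cast Int.cast ⁻¹' K : Set (ℤ × ℤ)).ncard : ℝ) - volume.real K| ≤
      (b - a) + (d - c) + 1 := by
  set rows : Finset ℤ := Finset.Icc ⌈c⌉ ⌊d⌋
  have hrows (s : ℝ) (n : ℤ) (h : (s, (n : ℝ)) ∈ K) : n ∈ rows :=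
    Finset.mem_Icc.2 ⟨Int.ceil_le.2 (hKbox h).2.1, Int.le_floor.2 (hKbox h).2.2⟩
  have hcard : (rows.card : ℝ) ≤ d - c + 1 := by
    have hcount := abs_ncard_intCast_preimage_sub_volume_le_one (isCompact_Icc (a := c) (b := d))
      (convex_Icc c d)
    rw [Int.preimage_Icc, Real.volume_real_Icc_of_le hcd, ← Finset.coe_Icc,
      ncard_coe_finset] at hcount
    linarith [(abs_le.1 hcount).2]
  have hsum : ((Prod.map Int.cast Int.cast ⁻¹' K : Set (ℤ × ℤ)).ncard : ℝ) =
      ∑ n ∈ rows, ((Int.cast ⁻¹' ((·, (n : ℝ)) ⁻¹' K) : Set ℤ).ncard : ℝ) :=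
    natCast_ncard_eq_sum_ncard_slice (S := Finset.Icc ⌈a⌉ ⌊b⌋) fun p hp =>
      ⟨by simpa [Int.ceil_le, Int.le_floor] using (hKbox hp).1, hrows _ _ hp⟩
  have hslice : |∑ n ∈ rows, ((Int.cast ⁻¹' ((·, (n : ℝ)) ⁻¹' K) : Set ℤ).ncard : ℝ) -
      ∑ n ∈ rows, volume.real ((·, (n : ℝ)) ⁻¹' K)| ≤ rows.card := by
    rw [← Finset.sum_sub_distrib, Finset.cast_card]
    refine (Finset.abs_sum_le_sum_abs _ _).trans (Finset.sum_le_sum fun n _ => ?_)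
    exact abs_ncard_intCast_preimage_sub_volume_le_one (isCompact_preimage_prodMk_right hK _)
      (hconv.affine_preimage ((AffineMap.id ℝ ℝ).prod (AffineMap.const ℝ ℝ (n : ℝ))))
  have hrowsum : |∑ n ∈ rows, volume.real ((·, (n : ℝ)) ⁻¹' K) - volume.real K| ≤ b - a := by
    rw [← Real.volume_real_Icc_of_le hab]
    exact abs_sum_measureReal_slice_sub_measureReal_le measurableSet_Icc measure_Icc_lt_top.ne
      hK.measurableSet hK.measure_lt_top.ne (fun p hp => (hKbox hp).1)
      (isCompact_preimage_prodMk_left hK)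
      (fun s => hconv.affine_preimage ((AffineMap.const ℝ ℝ s).prod (AffineMap.id ℝ ℝ))) hrows
  rw [hsum]
  linarith [abs_sub_le (∑ n ∈ rows, ((Int.cast ⁻¹' ((·, (n : ℝ)) ⁻¹' K) : Set ℤ).ncard : ℝ))
    (∑ n ∈ rows, volume.real ((·, (n : ℝ)) ⁻¹' K)) (volume.real K)]

theorem abs_ncard_intCast_preimage_diff_zero_sub_volume_le {K : Set (ℝ × ℝ)} (hK : IsCompact K)
    (hconv : Convex ℝ K) (h0 : 0 ∈ K) {M : ℝ} (hM : 0 ≤ M)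
    (hKbox : K ⊆ Icc (-M) M ×ˢ Icc (-M) M) :
    |((Prod.map Int.cast Int.cast ⁻¹' K \ {0} : Set (ℤ × ℤ)).ncard : ℝ) - volume.real K| ≤
      6 * M := by
  set P : Set (ℤ × ℤ) := Prod.map Int.cast Int.cast ⁻¹' K
  have hPbox : P ⊆ Icc ⌈-M⌉ ⌊M⌋ ×ˢ Icc ⌈-M⌉ ⌊M⌋ := by
    rw [← Int.preimage_Icc]
    exact fun p hp => hKbox hp
  rcases lt_or_ge M 1 with hM1 | hM1
  · have hPzero : P \ {0} = ∅ := by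
      have hceil : ⌈-M⌉ = 0 := by rw [Int.ceil_eq_iff]; constructor <;> norm_num <;> linarith
      have hfloor : ⌊M⌋ = 0 := Int.floor_eq_zero_iff.2 ⟨hM, hM1⟩
      rw [hceil, hfloor, Icc_self, singleton_prod_singleton] at hPbox
      exact sdiff_eq_empty.2 hPbox
    have hvol : volume.real K ≤ (2 * M) * (2 * M) := by
      calc volume.real K ≤ volume.real (Icc (-M) M ×ˢ Icc (-M) M) :=
            measureReal_mono hKbox (isCompact_Icc.prod isCompact_Icc).measure_lt_top.ne
        _ = (2 * M) * (2 * M) := by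
            rw [Measure.volume_eq_prod, measureReal_prod_prod,
              Real.volume_real_Icc_of_le (by linarith)]
            ring
    rw [hPzero, ncard_empty, Nat.cast_zero, zero_sub, abs_neg, abs_of_nonneg measureReal_nonneg]
    nlinarith
  · have h0P : (0 : ℤ × ℤ) ∈ P := by simpa [P, ← Prod.mk_zero_zero] using h0
    have hfin : P.Finite := ((finite_Icc _ _).prod (finite_Icc _ _)).subset hPbox
    have hcard : ((P \ {0}).ncard : ℝ) + 1 = P.ncard := by
      exact_mod_cast ncard_sdiff_singleton_add_one h0P hfin
    have hcount := abs_ncard_intCast_preimage_sub_volume_le hK hconv (by linarith : -M ≤ M)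
      (by linarith : -M ≤ M) hKbox
    rw [abs_le] at hcount ⊢
    constructor <;> linarith [hcount.1, hcount.2]

end IntegerPoints

section BoundaryLength

section NormedSpace

variable {E : Type*} [NormedAddCommGroup E] [NormedSpace ℝ E]

theorem exists_dist_add_smul_ge {e : E} (he : e ≠ 0) (x c : E) (r : ℝ) :
    ∃ t : ℝ, 0 ≤ t ∧ r ≤ dist (x + t • e) c := by
  have hpos : 0 < ‖e‖ := norm_pos_iff.2 he
  refine ⟨(|r| + dist x c) / ‖e‖, by positivity, ?_⟩
  have hdist : dist (x + ((|r| + dist x c) / ‖e‖) • e) x = |r| + dist x c := by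
    rw [dist_self_add_left, norm_smul, Real.norm_of_nonneg (by positivity),
      div_mul_cancel₀ _ hpos.ne']
  linarith [le_abs_self r, dist_triangle_right (x + ((|r| + dist x c) / ‖e‖) • e) x c]

theorem exists_add_smul_mem_sphere {e x c : E} {r : ℝ} (he : e ≠ 0) (hx : x ∈ ball c r) :
    ∃ t : ℝ, 0 ≤ t ∧ x + t • e ∈ sphere c r := by
  obtain ⟨T, hT, hfar⟩ := exists_dist_add_smul_ge he x c r
  have hcont : ContinuousOn (fun t : ℝ => dist (x + t • e) c) (Icc 0 T) := by fun_prop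
  obtain ⟨t, ht, hsphere⟩ :=
    intermediate_value_Icc hT hcont ⟨by simpa using (mem_ball.1 hx).le, hfar⟩
  exact ⟨t, ht.1, hsphere⟩

theorem exists_add_smul_mem_frontier {R : Set E} (hR : Bornology.IsBounded R) {x e : E}
    (hx : x ∈ R) (he : e ≠ 0) : ∃ t : ℝ, x + t • e ∈ frontier R := by
  have hcont : Continuous fun t : ℝ => x + t • e := by fun_prop
  obtain ⟨r, hr⟩ := hR.subset_ball x
  obtain ⟨T, -, hT⟩ := exists_dist_add_smul_ge he x x r
  have hne : (frontier ((fun t : ℝ => x + t • e) ⁻¹' R)).Nonempty :=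
    nonempty_frontier_iff.2 ⟨⟨0, by simpa using hx⟩,
      (ne_univ_iff_exists_notMem _).2 ⟨T, fun h => (mem_ball.1 (hr h)).not_ge hT⟩⟩
  obtain ⟨t, ht⟩ := hne
  exact ⟨t, hcont.frontier_preimage_subset R ht⟩

theorem exists_ne_zero_map_eq_zero_of_one_lt_rank (hE : 1 < Module.rank ℝ E) (f : E →ₗ[ℝ] ℝ) :
    ∃ e, e ≠ 0 ∧ f e = 0 := by
  have hker : LinearMap.ker f ≠ ⊥ := fun h =>
    hE.not_ge (by simpa using f.lift_rank_le_of_injective (LinearMap.ker_eq_bot.1 h))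
  obtain ⟨e, hmem, hne⟩ := Submodule.exists_mem_ne_zero_of_ne_bot hker
  exact ⟨e, hne, hmem⟩

variable [MeasurableSpace E] [BorelSpace E]

/-- A norming functional `g` of `y - x` maps `R` onto an interval containing `[g x, g y]`, and
every fibre of `g` meeting `R` meets the frontier of `R`. -/
theorem edist_le_hausdorffMeasure_frontier (hE : 1 < Module.rank ℝ E) {R : Set E}
    (hR : Bornology.IsBounded R) (hconn : IsPreconnected R) {x y : E} (hx : x ∈ R) (hy : y ∈ R) :
    edist x y ≤ μH[1] (frontier R) := by
  obtain ⟨g, hg, hgxy⟩ := exists_dual_vector'' ℝ (y - x)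
  obtain ⟨e, he, hge⟩ := exists_ne_zero_map_eq_zero_of_one_lt_rank hE g.toLinearMap
  have hlip : LipschitzWith 1 g := g.lipschitz.weaken hg
  have hcover : Icc (g x) (g y) ⊆ g '' frontier R := fun c hc => by
    obtain ⟨z, hz, rfl⟩ := hconn.intermediate_value hx hy g.continuous.continuousOn hc
    obtain ⟨t, ht⟩ := exists_add_smul_mem_frontier hR hz he
    exact ⟨_, ht, by simpa using Or.inr hge⟩
  calc edist x y = μH[1] (Icc (g x) (g y)) := by
        rw [hausdorffMeasure_real, Real.volume_Icc, ← map_sub, hgxy, edist_comm, edist_dist,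
          dist_eq_norm]
        rfl
    _ ≤ μH[1] (g '' frontier R) := measure_mono hcover
    _ ≤ μH[1] (frontier R) := by simpa using hlip.hausdorffMeasure_image_le zero_le_one (frontier R)

end NormedSpace

section InnerProductSpace

variable {E : Type*} [NormedAddCommGroup E] [InnerProductSpace ℝ E]

theorem norm_sub_le_of_inner_sub_sub_nonpos {x x' y y' : E} (h : ⟪x - y, y' - y⟫ ≤ 0)
    (h' : ⟪x' - y', y - y'⟫ ≤ 0) : ‖y - y'‖ ≤ ‖x - x'‖ := by
  have hsq : ‖y - y'‖ * ‖y - y'‖ ≤ ‖x - x'‖ * ‖y - y'‖ :=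
    calc ‖y - y'‖ * ‖y - y'‖ = ⟪x - x', y - y'⟫ + ⟪x - y, y' - y⟫ + ⟪x' - y', y - y'⟫ := by
          rw [← real_inner_self_eq_norm_mul_norm]
          simp only [inner_sub_left, inner_sub_right]
          ring
      _ ≤ ⟪x - x', y - y'⟫ := by linarith
      _ ≤ ‖x - x'‖ * ‖y - y'‖ := real_inner_le_norm _ _
  rcases (norm_nonneg (y - y')).eq_or_lt with hzero | hpos
  · exact hzero ▸ norm_nonneg _
  · exact le_of_mul_le_mul_right hsq hpos

/-- `P` is the nearest-point projection onto the convex set `R`, encoded by the variational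
inequality that characterises the nearest point. -/
structure IsConvexProjection (R : Set E) (P : E → E) : Prop where
  mem : ∀ x, P x ∈ R
  inner_nonpos : ∀ x, ∀ y ∈ R, ⟪x - P x, y - P x⟫ ≤ 0

theorem exists_isConvexProjection {R : Set E} (hR : IsComplete R) (hconv : Convex ℝ R)
    (hne : R.Nonempty) : ∃ P, IsConvexProjection R P := by
  choose P hmem hmin using exists_norm_eq_iInf_of_complete_convex hne hR hconv
  exact ⟨P, hmem, fun x => (norm_eq_iInf_iff_real_inner_le_zero hconv (hmem x)).1 (hmin x)⟩

namespace IsConvexProjection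

variable {R : Set E} {P : E → E}

theorem lipschitzWith (hP : IsConvexProjection R P) : LipschitzWith 1 P :=
  .of_dist_le_mul fun x x' => by
    simpa [dist_eq_norm] using norm_sub_le_of_inner_sub_sub_nonpos
      (hP.inner_nonpos x _ (hP.mem x')) (hP.inner_nonpos x' _ (hP.mem x))

theorem eq_of_inner_nonpos (hP : IsConvexProjection R P) {x y : E} (hy : y ∈ R)
    (h : ∀ z ∈ R, ⟪x - y, z - y⟫ ≤ 0) : P x = y := by
  simpa [sub_eq_zero] using
    norm_sub_le_of_inner_sub_sub_nonpos (hP.inner_nonpos x y hy) (h _ (hP.mem x))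

theorem apply_of_mem (hP : IsConvexProjection R P) {x : E} (hx : x ∈ R) : P x = x :=
  hP.eq_of_inner_nonpos hx (by simp)

theorem apply_add_smul (hP : IsConvexProjection R P) (x : E) {t : ℝ} (ht : 0 ≤ t) :
    P (P x + t • (x - P x)) = P x :=
  hP.eq_of_inner_nonpos (hP.mem x) fun z hz => by
    rw [add_sub_cancel_left, real_inner_smul_left]
    exact mul_nonpos_of_nonneg_of_nonpos ht (hP.inner_nonpos x z hz)

theorem image_compl_subset_image_sphere (hP : IsConvexProjection R P) {c : E} {r : ℝ}
    (hRr : R ⊆ ball c r) : P '' Rᶜ ⊆ P '' sphere c r := by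
  rintro _ ⟨x, hx, rfl⟩
  have hne : x - P x ≠ 0 := sub_ne_zero.2 fun h => hx (h ▸ hP.mem x)
  obtain ⟨t, ht, hsphere⟩ := exists_add_smul_mem_sphere hne (hRr (hP.mem x))
  exact ⟨_, hsphere, hP.apply_add_smul x ht⟩

theorem frontier_subset_image_sphere [ProperSpace E] (hP : IsConvexProjection R P)
    (hR : IsClosed R) {c : E} {r : ℝ} (hRr : R ⊆ ball c r) : frontier R ⊆ P '' sphere c r := by
  intro x hx
  have hcont := hP.lipschitzWith.continuous
  have hclosed : IsClosed (P '' sphere c r) := ((isCompact_sphere c r).image hcont).isClosed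
  have hxcl : x ∈ closure Rᶜ := by
    rw [frontier_eq_closure_inter_closure] at hx
    exact hx.2
  rw [← hP.apply_of_mem (hR.frontier_subset hx)]
  exact closure_minimal (hP.image_compl_subset_image_sphere hRr) hclosed
    (image_closure_subset_closure_image hcont (mem_image_of_mem P hxcl))

end IsConvexProjection

variable [MeasurableSpace E] [BorelSpace E]

theorem hausdorffMeasure_frontier_le_hausdorffMeasure_sphere [ProperSpace E] {R : Set E}
    (hR : IsClosed R) (hconv : Convex ℝ R) {c : E} {r : ℝ} (hRr : R ⊆ ball c r) {d : ℝ}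
    (hd : 0 ≤ d) : μH[d] (frontier R) ≤ μH[d] (sphere c r) := by
  rcases R.eq_empty_or_nonempty with rfl | hne
  · simp
  obtain ⟨P, hP⟩ := exists_isConvexProjection hR.isComplete hconv hne
  calc μH[d] (frontier R) ≤ μH[d] (P '' sphere c r) :=
        measure_mono (hP.frontier_subset_image_sphere hR hRr)
    _ ≤ μH[d] (sphere c r) := by simpa using hP.lipschitzWith.hausdorffMeasure_image_le hd _

variable [Fact (finrank ℝ E = 2)]

theorem hausdorffMeasure_sphere_lt_top (c : E) (r : ℝ) : μH[1] (sphere c r) < ∞ := by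
  rcases lt_or_ge r 0 with hr | hr
  · simp [sphere_eq_empty_of_neg hr]
  have : FiniteDimensional ℝ E := .of_fact_finrank_eq_succ 1
  let φ : ℂ ≃ᵢ E := (Complex.isometryOfOrthonormal
    ((stdOrthonormalBasis ℝ E).reindex (finCongr Fact.out))).toIsometryEquiv
  calc μH[1] (sphere c r)
      = μH[1] (circleMap (φ.symm c) r '' Ioc 0 (2 * π)) := by
        rw [image_circleMap_Ioc, abs_of_nonneg hr, ← φ.symm.image_sphere,
          φ.symm.hausdorffMeasure_image]
    _ ≤ (Real.nnabs r : ℝ≥0∞) ^ (1 : ℝ) * μH[1] (Ioc 0 (2 * π)) :=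
        (lipschitzWith_circleMap _ _).hausdorffMeasure_image_le zero_le_one _
    _ < ∞ := by
        rw [ENNReal.rpow_one, hausdorffMeasure_real]
        exact ENNReal.mul_lt_top ENNReal.coe_lt_top measure_Ioc_lt_top

theorem hausdorffMeasure_frontier_lt_top {R : Set E} (hR : IsCompact R) (hconv : Convex ℝ R) :
    μH[1] (frontier R) < ∞ := by
  have : FiniteDimensional ℝ E := .of_fact_finrank_eq_succ 1
  have : ProperSpace E := FiniteDimensional.proper_real E
  obtain ⟨r, hr⟩ := hR.isBounded.subset_ball 0
  exact (hausdorffMeasure_frontier_le_hausdorffMeasure_sphere hR.isClosed hconv hr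
    zero_le_one).trans_lt (hausdorffMeasure_sphere_lt_top 0 r)

theorem dist_le_toReal_hausdorffMeasure_frontier {R : Set E} (hR : IsCompact R)
    (hconv : Convex ℝ R) {x y : E} (hx : x ∈ R) (hy : y ∈ R) :
    dist x y ≤ (μH[1] (frontier R)).toReal := by
  have hrank : 1 < Module.rank ℝ E :=
    one_lt_rank_of_one_lt_finrank (by rw [(Fact.out : finrank ℝ E = 2)]; exact one_lt_two)
  rw [dist_edist]
  exact ENNReal.toReal_mono (hausdorffMeasure_frontier_lt_top hR hconv).ne
    (edist_le_hausdorffMeasure_frontier hrank hR.isBounded hconv.isPreconnected hx hy)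

end InnerProductSpace

end BoundaryLength

section ReducedBasis

theorem span_pair_sub_smul {A M : Type*} [CommRing A] [AddCommGroup M] [Module A M] (a c : M)
    (r : A) : Submodule.span A {a, c - r • a} = Submodule.span A {a, c} := by
  refine le_antisymm (Submodule.span_le.2 ?_) (Submodule.span_le.2 ?_) <;>
    simp only [insert_subset_iff, singleton_subset_iff, SetLike.mem_coe, Submodule.mem_span_pair]
  · exact ⟨⟨1, 0, by simp⟩, ⟨-r, 1, by module⟩⟩
  · exact ⟨⟨1, 0, by simp⟩, ⟨r, 1, by module⟩⟩

theorem exists_span_pair_eq_of_isCoprime {A M : Type*} [CommRing A] [AddCommGroup M] [Module A M]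
    (v w : M) {m n : A} (h : IsCoprime m n) :
    ∃ c, Submodule.span A {m • v + n • w, c} = Submodule.span A {v, w} := by
  obtain ⟨p, q, hpq⟩ := h
  have hv : p • (m • v + n • w) + (-n) • (p • w - q • v) = v :=
    calc _ = (p * m + q * n) • v := by module
      _ = v := by rw [hpq, one_smul]
  have hw : q • (m • v + n • w) + m • (p • w - q • v) = w :=
    calc _ = (p * m + q * n) • w := by module
      _ = w := by rw [hpq, one_smul]
  refine ⟨p • w - q • v, le_antisymm (Submodule.span_le.2 ?_) (Submodule.span_le.2 ?_)⟩ <;>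
    simp only [insert_subset_iff, singleton_subset_iff, SetLike.mem_coe, Submodule.mem_span_pair]
  · exact ⟨⟨m, n, rfl⟩, ⟨-q, p, by module⟩⟩
  · exact ⟨⟨p, -n, hv⟩, ⟨q, m, hw⟩⟩

theorem right_ne_zero_of_span_pair_eq {A M : Type*} [CommRing A] [Nontrivial A] [AddCommGroup M]
    [Module A M] {v w a b : M} (hvw : LinearIndependent A ![v, w])
    (h : Submodule.span A {a, b} = Submodule.span A {v, w}) : b ≠ 0 := by
  rintro rfl
  have hmem (x : M) (hx : x ∈ ({v, w} : Set M)) : ∃ m : A, m • a = x := by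
    simpa [Submodule.mem_span_pair] using h.ge (Submodule.subset_span hx)
  obtain ⟨m, rfl⟩ := hmem v (mem_insert _ _)
  obtain ⟨n, rfl⟩ := hmem w (mem_insert_of_mem _ rfl)
  obtain ⟨hn, -⟩ := LinearIndependent.pair_iff.1 hvw n (-m) (by module)
  exact hvw.ne_zero 1 (by simp [hn])

/-- `a` is a nonzero vector of minimal length in the lattice `Λ`, so that `‖a‖` is the first
successive minimum of `Λ`. -/
structure IsShortestVector {E : Type*} [NormedAddCommGroup E] (Λ : Submodule ℤ E) (a : E) :
    Prop where
  mem : a ∈ Λ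
  ne_zero : a ≠ 0
  norm_le : ∀ x ∈ Λ, x ≠ 0 → ‖a‖ ≤ ‖x‖

namespace IsShortestVector

theorem isUnit_of_zsmul_eq {E : Type*} [NormedAddCommGroup E] [NormedSpace ℝ E]
    {Λ : Submodule ℤ E} {a x : E} (ha : IsShortestVector Λ a) {g : ℤ} (hx : x ∈ Λ)
    (h : g • x = a) : IsUnit g := by
  have hg : g ≠ 0 := fun h0 => ha.ne_zero (by simp [← h, h0])
  have hx0 : x ≠ 0 := fun h0 => ha.ne_zero (by simp [← h, h0])
  have hnorm : |(g : ℝ)| * ‖x‖ ≤ 1 * ‖x‖ := by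
    rw [one_mul, ← Real.norm_eq_abs, ← norm_smul, Int.cast_smul_eq_zsmul, h]
    exact ha.norm_le x hx hx0
  have hle : |g| ≤ 1 := by
    exact_mod_cast le_of_mul_le_mul_right hnorm (norm_pos_iff.2 hx0)
  exact Int.isUnit_iff_abs_eq.2 (le_antisymm hle (Int.one_le_abs hg))

theorem isCoprime {E : Type*} [NormedAddCommGroup E] [NormedSpace ℝ E] {v w a : E}
    (ha : IsShortestVector (Submodule.span ℤ {v, w}) a) {m n : ℤ} (h : m • v + n • w = a) :
    IsCoprime m n := by
  rw [← isRelPrime_iff_isCoprime]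
  rintro g ⟨m', rfl⟩ ⟨n', rfl⟩
  exact ha.isUnit_of_zsmul_eq (Submodule.mem_span_pair.2 ⟨m', n', rfl⟩)
    (by rw [smul_add, smul_smul, smul_smul, h])

end IsShortestVector

section InnerProductSpace

variable {E : Type*} [NormedAddCommGroup E] [InnerProductSpace ℝ E]

/-- The lattice basis `a, b` is reduced in the sense of Lagrange and Gauss. -/
structure IsReducedPair (a b : E) : Prop where
  norm_le : ‖a‖ ≤ ‖b‖
  two_mul_abs_inner_le : 2 * |⟪a, b⟫| ≤ ‖a‖ ^ 2

theorem exists_two_mul_abs_inner_sub_zsmul_le (a c : E) :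
    ∃ r : ℤ, 2 * |⟪a, c - r • a⟫| ≤ ‖a‖ ^ 2 := by
  rcases eq_or_ne a 0 with rfl | ha
  · exact ⟨0, by simp⟩
  have hpos : 0 < ‖a‖ ^ 2 := by positivity
  refine ⟨round (⟪a, c⟫ / ‖a‖ ^ 2), ?_⟩
  have hinner (r : ℤ) : ⟪a, c - r • a⟫ = (⟪a, c⟫ / ‖a‖ ^ 2 - r) * ‖a‖ ^ 2 := by
    rw [inner_sub_right, ← Int.cast_smul_eq_zsmul ℝ, real_inner_smul_right,
      real_inner_self_eq_norm_sq, sub_mul, div_mul_cancel₀ _ hpos.ne']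
  rw [hinner, abs_mul, abs_of_pos hpos]
  nlinarith [abs_sub_round (⟪a, c⟫ / ‖a‖ ^ 2)]

theorem IsShortestVector.exists_isReducedPair {v w a : E}
    (ha : IsShortestVector (Submodule.span ℤ {v, w}) a) (hvw : LinearIndependent ℤ ![v, w]) :
    ∃ b, Submodule.span ℤ {a, b} = Submodule.span ℤ {v, w} ∧ IsReducedPair a b := by
  obtain ⟨m, n, hmn⟩ := Submodule.mem_span_pair.1 ha.mem
  obtain ⟨c, hc⟩ := exists_span_pair_eq_of_isCoprime v w (ha.isCoprime hmn)
  obtain ⟨r, hr⟩ := exists_two_mul_abs_inner_sub_zsmul_le a c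
  have hspan : Submodule.span ℤ {a, c - r • a} = Submodule.span ℤ {v, w} := by
    rw [span_pair_sub_smul, ← hc, hmn]
  have hne : c - r • a ≠ 0 := right_ne_zero_of_span_pair_eq hvw hspan
  exact ⟨c - r • a, hspan,
    ha.norm_le _ (hspan ▸ Submodule.subset_span (mem_insert_of_mem _ rfl)) hne, hr⟩

variable [Fact (finrank ℝ E = 2)] (o : Orientation ℝ E (Fin 2))

theorem areaForm_ne_zero_of_linearIndependent {v w : E} (h : LinearIndependent ℝ ![v, w]) :
    o.areaForm v w ≠ 0 := by
  have : FiniteDimensional ℝ E := .of_fact_finrank_eq_succ 1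
  let e : OrthonormalBasis (Fin 2) ℝ E :=
    (stdOrthonormalBasis ℝ E).reindex (finCongr Fact.out)
  have hspan : Submodule.span ℝ (range ![v, w]) = ⊤ :=
    h.span_eq_top_of_card_eq_finrank' (by simp [(Fact.out : finrank ℝ E = 2)])
  rw [← abs_ne_zero, o.areaForm_to_volumeForm, o.volumeForm_robust' e, abs_ne_zero]
  exact ((e.toBasis.is_basis_iff_det).1 ⟨h, hspan⟩).ne_zero

theorem exists_int_areaForm_eq_of_mem_span {v w a b : E} (ha : a ∈ Submodule.span ℤ {v, w})
    (hb : b ∈ Submodule.span ℤ {v, w}) : ∃ k : ℤ, o.areaForm a b = k * o.areaForm v w := by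
  obtain ⟨m, n, rfl⟩ := Submodule.mem_span_pair.1 ha
  obtain ⟨p, q, rfl⟩ := Submodule.mem_span_pair.1 hb
  refine ⟨m * q - n * p, ?_⟩
  simp only [← Int.cast_smul_eq_zsmul ℝ, map_add, map_smul, LinearMap.add_apply,
    LinearMap.smul_apply, smul_eq_mul, o.areaForm_apply_self, o.areaForm_swap w v]
  push_cast
  ring

theorem abs_areaForm_eq_of_span_eq {v w a b : E}
    (h : Submodule.span ℤ {a, b} = Submodule.span ℤ {v, w}) :
    |o.areaForm a b| = |o.areaForm v w| := by
  have hleft (x y : E) : x ∈ Submodule.span ℤ {x, y} := Submodule.subset_span (mem_insert _ _)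
  have hright (x y : E) : y ∈ Submodule.span ℤ {x, y} :=
    Submodule.subset_span (mem_insert_of_mem _ rfl)
  obtain ⟨k, hk⟩ := exists_int_areaForm_eq_of_mem_span o (h.le (hleft a b)) (h.le (hright a b))
  obtain ⟨l, hl⟩ := exists_int_areaForm_eq_of_mem_span o (h.ge (hleft v w)) (h.ge (hright v w))
  rcases eq_or_ne (o.areaForm v w) 0 with h0 | h0
  · rw [hk, h0, mul_zero]
  have hlk : l * k = 1 := by
    rw [hk, ← mul_assoc, right_eq_mul₀ h0] at hl
    exact_mod_cast hl
  rw [hk, abs_mul, ← Int.cast_abs, Int.isUnit_iff_abs_eq.1 (.of_mul_eq_one_right _ hlk),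
    Int.cast_one, one_mul]

end InnerProductSpace

end ReducedBasis

section Coordinates

attribute [local instance] FiniteDimensional.of_fact_finrank_eq_two

variable {E : Type*} [NormedAddCommGroup E] [InnerProductSpace ℝ E]

/-- The map `(s, t) ↦ s • a + t • b`; for a lattice basis `a, b` it carries `ℤ × ℤ` onto the
lattice. -/
noncomputable def coordMap (a b : E) : ℝ × ℝ →L[ℝ] E :=
  (ContinuousLinearMap.toSpanSingleton ℝ a).coprod (ContinuousLinearMap.toSpanSingleton ℝ b)

theorem coordMap_apply (a b : E) (p : ℝ × ℝ) : coordMap a b p = p.1 • a + p.2 • b := rfl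

theorem coordMap_intCast (a b : E) (p : ℤ × ℤ) :
    coordMap a b (Prod.map Int.cast Int.cast p) = p.1 • a + p.2 • b := by
  simp [coordMap_apply, Int.cast_smul_eq_zsmul]

theorem ncard_span_pair_eq_ncard_coordMap_preimage {a b : E}
    (hinj : Function.Injective (coordMap a b)) (R : Set E) :
    {x | x ∈ Submodule.span ℤ {a, b} ∧ x ∈ R ∧ x ≠ 0}.ncard =
      (Prod.map Int.cast Int.cast ⁻¹' (coordMap a b ⁻¹' R) \ {0} : Set (ℤ × ℤ)).ncard := by
  have hcast : Function.Injective (Prod.map Int.cast Int.cast : ℤ × ℤ → ℝ × ℝ) :=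
    Int.cast_injective.prodMap Int.cast_injective
  have hzero (p : ℤ × ℤ) : p.1 • a + p.2 • b = 0 ↔ p = 0 := by
    rw [← coordMap_intCast, map_eq_zero_iff _ hinj]
    simp [Prod.ext_iff]
  rw [← ncard_image_of_injective _ (hinj.comp hcast)]
  congr 1
  ext x
  simp only [Function.comp_apply, coordMap_intCast, mem_image, mem_sdiff, mem_preimage,
    mem_singleton_iff, ← hzero, Submodule.mem_span_pair, mem_ofPred_eq]
  constructor
  · rintro ⟨⟨m, n, rfl⟩, hR, h0⟩
    exact ⟨(m, n), ⟨hR, h0⟩, rfl⟩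
  · rintro ⟨p, ⟨hR, h0⟩, rfl⟩
    exact ⟨⟨p.1, p.2, rfl⟩, hR, h0⟩

namespace IsReducedPair

variable {a b : E}

theorem mul_norm_sq_le (h : IsReducedPair a b) (p : ℝ × ℝ) :
    (p.1 ^ 2 - |p.1 * p.2| + p.2 ^ 2) * ‖a‖ ^ 2 ≤ ‖coordMap a b p‖ ^ 2 := by
  have hexpand : ‖coordMap a b p‖ ^ 2 =
      p.1 ^ 2 * ‖a‖ ^ 2 + 2 * (p.1 * p.2 * ⟪a, b⟫) + p.2 ^ 2 * ‖b‖ ^ 2 := by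
    rw [coordMap_apply, norm_add_sq_real, norm_smul, norm_smul, mul_pow, mul_pow, Real.norm_eq_abs,
      Real.norm_eq_abs, sq_abs, sq_abs, real_inner_smul_left, real_inner_smul_right, mul_assoc p.1]
  have hcross : -(|p.1 * p.2| * ‖a‖ ^ 2) ≤ 2 * (p.1 * p.2 * ⟪a, b⟫) :=
    calc -(|p.1 * p.2| * ‖a‖ ^ 2) ≤ -(|p.1 * p.2| * (2 * |⟪a, b⟫|)) := by
          gcongr; exact h.two_mul_abs_inner_le
      _ = 2 * -|p.1 * p.2 * ⟪a, b⟫| := by rw [abs_mul (p.1 * p.2)]; ring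
      _ ≤ 2 * (p.1 * p.2 * ⟪a, b⟫) := by gcongr; exact neg_abs_le _
  have hb : p.2 ^ 2 * ‖a‖ ^ 2 ≤ p.2 ^ 2 * ‖b‖ ^ 2 := by gcongr; exact h.norm_le
  linarith

theorem abs_fst_mul_norm_le (h : IsReducedPair a b) (p : ℝ × ℝ) :
    |p.1| * ‖a‖ ≤ 2 * ‖coordMap a b p‖ := by
  have hquad : p.1 ^ 2 ≤ 4 * (p.1 ^ 2 - |p.1 * p.2| + p.2 ^ 2) := by
    rw [abs_mul, ← sq_abs p.1, ← sq_abs p.2]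
    nlinarith [sq_nonneg (|p.1| - 2 * |p.2|)]
  refine le_of_sq_le_sq ?_ (by positivity)
  nlinarith [h.mul_norm_sq_le p, mul_le_mul_of_nonneg_right hquad (sq_nonneg ‖a‖), sq_abs p.1]

theorem abs_snd_mul_norm_le (h : IsReducedPair a b) (p : ℝ × ℝ) :
    |p.2| * ‖a‖ ≤ 2 * ‖coordMap a b p‖ := by
  have hquad : p.2 ^ 2 ≤ 4 * (p.1 ^ 2 - |p.1 * p.2| + p.2 ^ 2) := by
    rw [abs_mul, ← sq_abs p.1, ← sq_abs p.2]
    nlinarith [sq_nonneg (2 * |p.1| - |p.2|)]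
  refine le_of_sq_le_sq ?_ (by positivity)
  nlinarith [h.mul_norm_sq_le p, mul_le_mul_of_nonneg_right hquad (sq_nonneg ‖a‖), sq_abs p.2]

theorem injective_coordMap (h : IsReducedPair a b) (ha : a ≠ 0) :
    Function.Injective (coordMap a b) := by
  refine (injective_iff_map_eq_zero _).2 fun p hp => ?_
  have hfst := h.abs_fst_mul_norm_le p
  have hsnd := h.abs_snd_mul_norm_le p
  rw [hp, norm_zero, mul_zero] at hfst hsnd
  have hpos : 0 < ‖a‖ := norm_pos_iff.2 ha
  exact Prod.ext_iff.2 ⟨abs_nonpos_iff.1 (nonpos_of_mul_nonpos_left hfst hpos),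
    abs_nonpos_iff.1 (nonpos_of_mul_nonpos_left hsnd hpos)⟩

theorem coordMap_preimage_subset (h : IsReducedPair a b) (ha : a ≠ 0) {R : Set E} {r : ℝ}
    (hR : ∀ x ∈ R, ‖x‖ ≤ r) : coordMap a b ⁻¹' R ⊆
      Icc (-(2 * r / ‖a‖)) (2 * r / ‖a‖) ×ˢ Icc (-(2 * r / ‖a‖)) (2 * r / ‖a‖) := by
  intro p hp
  have hpos : 0 < ‖a‖ := norm_pos_iff.2 ha
  refine ⟨abs_le.1 ((le_div_iff₀ hpos).2 ?_), abs_le.1 ((le_div_iff₀ hpos).2 ?_)⟩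
  · linarith [h.abs_fst_mul_norm_le p, hR _ hp]
  · linarith [h.abs_snd_mul_norm_le p, hR _ hp]

end IsReducedPair

variable [MeasurableSpace E] [BorelSpace E]

theorem measurePreserving_coordMap_orthonormalBasis [FiniteDimensional ℝ E]
    (e : OrthonormalBasis (Fin 2) ℝ E) : MeasurePreserving (coordMap (e 0) (e 1)) := by
  have hcomp : ⇑(coordMap (e 0) (e 1)) =
      e.repr.symm ∘ WithLp.toLp 2 ∘ (MeasurableEquiv.finTwoArrow (α := ℝ)).symm := by
    ext p
    simp [coordMap_apply, ← e.sum_repr_symm]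
  rw [hcomp]
  exact e.measurePreserving_repr_symm.comp <|
    (PiLp.volume_preserving_toLp (Fin 2)).comp (volume_preserving_finTwoArrow ℝ).symm

variable [Fact (finrank ℝ E = 2)] (o : Orientation ℝ E (Fin 2))

theorem volume_real_coordMap_preimage {a b : E} (hab : o.areaForm a b ≠ 0) {R : Set E}
    (hR : MeasurableSet R) :
    volume.real (coordMap a b ⁻¹' R) = volume.real R / |o.areaForm a b| := by
  let e : OrthonormalBasis (Fin 2) ℝ E := o.finOrthonormalBasis two_pos Fact.out
  let T : E →ₗ[ℝ] E := e.toBasis.constr ℝ ![a, b]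
  have hT (i : Fin 2) : T (e i) = ![a, b] i := by
    rw [← e.coe_toBasis]
    exact e.toBasis.constr_basis ℝ ![a, b] i
  have hdet : LinearMap.det T = o.areaForm a b := by
    rw [o.areaForm_to_volumeForm, o.volumeForm_robust e (o.finOrthonormalBasis_orientation ..)]
    have hTe : T ∘ e.toBasis = ![a, b] := funext fun i => by simp [hT]
    rw [← hTe, e.toBasis.det_comp, e.toBasis.det_self, mul_one]
  have hcomp : ⇑(coordMap a b) = T ∘ coordMap (e 0) (e 1) := by
    ext p
    simp [coordMap_apply, hT]
  have hTR : MeasurableSet (T ⁻¹' R) := hR.preimage T.continuous_of_finiteDimensional.measurable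
  rw [hcomp, preimage_comp, measureReal_def,
    (measurePreserving_coordMap_orthonormalBasis e).measure_preimage hTR.nullMeasurableSet,
    Measure.addHaar_preimage_linearMap _ (hdet ▸ hab), hdet, ENNReal.toReal_mul,
    ENNReal.toReal_ofReal (abs_nonneg _), abs_inv, div_eq_inv_mul, measureReal_def]

end Coordinates

section LatticePointCount

attribute [local instance] FiniteDimensional.of_fact_finrank_eq_two

variable {E : Type*} [NormedAddCommGroup E] [InnerProductSpace ℝ E] [Fact (finrank ℝ E = 2)]
  (o : Orientation ℝ E (Fin 2))

variable [MeasurableSpace E] [BorelSpace E]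

theorem stmt_14_general {v w a : E} (hvw : LinearIndependent ℝ ![v, w])
    (ha : IsShortestVector (Submodule.span ℤ {v, w}) a) {R : Set E} (hR : IsCompact R)
    (hconv : Convex ℝ R) (h0 : 0 ∈ R) :
    |(({x | x ∈ Submodule.span ℤ {v, w} ∧ x ∈ R ∧ x ≠ 0}.ncard : ℝ) -
        volume.real R / |o.areaForm v w|)| ≤ 12 * (μH[1] (frontier R)).toReal / ‖a‖ := by
  obtain ⟨b, hspan, hred⟩ := ha.exists_isReducedPair (hvw.restrict_scalars' ℤ)
  have harea : |o.areaForm a b| = |o.areaForm v w| := abs_areaForm_eq_of_span_eq o hspan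
  have hab : o.areaForm a b ≠ 0 :=
    abs_ne_zero.1 (harea ▸ abs_ne_zero.2 (areaForm_ne_zero_of_linearIndependent o hvw))
  have hnorm (x : E) (hx : x ∈ R) : ‖x‖ ≤ (μH[1] (frontier R)).toReal := by
    simpa using dist_le_toReal_hausdorffMeasure_frontier hR hconv hx h0
  have hbox := hred.coordMap_preimage_subset ha.ne_zero hnorm
  have hcompact : IsCompact (coordMap a b ⁻¹' R) :=
    (isCompact_Icc.prod isCompact_Icc).of_isClosed_subset
      (hR.isClosed.preimage (coordMap a b).continuous) hbox
  rw [← hspan, ncard_span_pair_eq_ncard_coordMap_preimage (hred.injective_coordMap ha.ne_zero),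
    ← harea, ← volume_real_coordMap_preimage o hab hR.measurableSet]
  convert abs_ncard_intCast_preimage_diff_zero_sub_volume_le hcompact
    (hconv.linear_preimage (coordMap a b).toLinearMap) (by simpa using h0) (by positivity) hbox
    using 1
  ring

theorem areaForm_euclideanSpace_eq [Fact (finrank ℝ (EuclideanSpace ℝ (Fin 2)) = 2)]
    (v w : EuclideanSpace ℝ (Fin 2)) :
    (EuclideanSpace.basisFun (Fin 2) ℝ).toBasis.orientation.areaForm v w =
      v 0 * w 1 - v 1 * w 0 := by
  rw [Orientation.areaForm_to_volumeForm,
    Orientation.volumeForm_robust _ (EuclideanSpace.basisFun (Fin 2) ℝ) rfl, Basis.det_apply,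
    Matrix.det_fin_two]
  simp [Basis.toMatrix_apply]
  ring

end LatticePointCount

/-- **Lattice point counting in planar domains.** There is an absolute constant `C` such
that for any rank-2 lattice `Λ = ℤv + ℤw` in the Euclidean plane, with shortest nonzero
vector of length `λ1`, and any compact convex region `R` containing the origin,
the number of nonzero lattice points in `R` equals `area R / det Λ`
up to an error at most `C · |∂R| / λ1`. -/
theorem stmt_14 :
    ∃ C : ℝ, 0 < C ∧
      ∀ (v w : EuclideanSpace ℝ (Fin 2)), LinearIndependent ℝ ![v, w] →
      ∀ (R : Set (EuclideanSpace ℝ (Fin 2))), IsCompact R → Convex ℝ R →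
        (0 : EuclideanSpace ℝ (Fin 2)) ∈ R →
      ∀ (lam1 : ℝ), 0 < lam1 →
        (∀ x ∈ Submodule.span ℤ ({v, w} : Set (EuclideanSpace ℝ (Fin 2))),
          x ≠ 0 → lam1 ≤ ‖x‖) →
        (∃ x ∈ Submodule.span ℤ ({v, w} : Set (EuclideanSpace ℝ (Fin 2))),
          x ≠ 0 ∧ ‖x‖ = lam1) →
      abs (({x : EuclideanSpace ℝ (Fin 2) |
            x ∈ Submodule.span ℤ ({v, w} : Set (EuclideanSpace ℝ (Fin 2))) ∧
            x ∈ R ∧ x ≠ 0}.ncard : ℝ) -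
          (volume R).toReal / abs (v 0 * w 1 - v 1 * w 0)) ≤
        C * (μH[1] (frontier R)).toReal / lam1 := by
  have : Fact (finrank ℝ (EuclideanSpace ℝ (Fin 2)) = 2) := ⟨finrank_euclideanSpace_fin⟩
  refine ⟨12, by norm_num, fun v w hvw R hR hconv h0 lam1 _ hmin ⟨a, ha, ha0, hnorm⟩ => ?_⟩
  subst hnorm
  rw [← areaForm_euclideanSpace_eq]
  exact stmt_14_general _ hvw ⟨ha, ha0, hmin⟩ hR hconv h0
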